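/- Let a, b ∈ R^m be nonzero with 𝔰(a) = 𝔰(b) and lc(a) = lc(b), and let G ⊆ R^m be a signature Gröbner basis up to 𝔰(a). If both a and b are regular top s-irreducible modulo G, then ‾a = 0 if and only if ‾b = 0, and if ‾a and ‾b are nonzero then lp(‾a) = lp(‾b) and lc(‾a) = lc(‾b). -/

import Mathlib

namespace SigGB

noncomputable section

/-- Power-products in `n` indeterminates, written additively as exponent vectors
(so the power-product `1` is `0`, and multiplication of power-products is `+`). -/
abbrev PP (n : ℕ) : Type := Fin n →₀ ℕ

/-- Terms: a power-product together with a component index (`t·e_i ↝ (t, i)`). -/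
abbrev Term (n m : ℕ) : Type := PP n × Fin m

/-- Multiplication of a term by a power-product: `t ⊗ (s·e_i) = (t·s)·e_i`. -/
def mulTerm {n m : ℕ} (t : PP n) (u : Term n m) : Term n m := (t + u.1, u.2)

/-- Divisibility of terms: `u ∣ v` iff `v = t ⊗ u` for some power-product `t`. -/
def termDvd {n m : ℕ} (u v : Term n m) : Prop := ∃ t : PP n, v = mulTerm t u

/-- Componentwise lcm of power-products. -/
noncomputable def lcmPP {n : ℕ} (s t : PP n) : PP n := Finsupp.zipWith max (max_self 0) s t

/-- Strict part of a relation. -/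
def strict {α : Type*} (r : α → α → Prop) (x y : α) : Prop := r x y ∧ x ≠ y

/-- `ple` is an admissible order on power-products and `tle` is a compatible
linear order on terms. -/
structure OrdersOK {n m : ℕ} (ple : PP n → PP n → Prop)
    (tle : Term n m → Term n m → Prop) : Prop where
  ple_refl : ∀ t, ple t t
  ple_trans : ∀ s t u, ple s t → ple t u → ple s u
  ple_antisymm : ∀ s t, ple s t → ple t s → s = t
  ple_total : ∀ s t, ple s t ∨ ple t s
  ple_one_le : ∀ t, ple 0 t
  ple_mul : ∀ (t s₁ s₂ : PP n), ple s₁ s₂ → ple (t + s₁) (t + s₂)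
  tle_refl : ∀ u, tle u u
  tle_trans : ∀ u v w, tle u v → tle v w → tle u w
  tle_antisymm : ∀ u v, tle u v → tle v u → u = v
  tle_total : ∀ u v, tle u v ∨ tle v u
  tle_mul : ∀ (t : PP n) (u v : Term n m), tle u v → tle (mulTerm t u) (mulTerm t v)
  tle_compat : ∀ (s t : PP n) (i j : Fin m), ple s t → i ≤ j → tle (s, i) (t, j)

variable {K : Type*} [Field K] {n m : ℕ} [NeZero m]

variable (f : Fin m → MvPolynomial (Fin n) K)
variable (ple : PP n → PP n → Prop)
variable (tle : Term n m → Term n m → Prop)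

/-- The module homomorphism `R^m → R` determined by `e_i ↦ f i`, i.e. `a ↦ ‾a`. -/
def bar (a : Fin m → MvPolynomial (Fin n) K) : MvPolynomial (Fin n) K := ∑ i, a i * f i

/-- Multiplication of a module element by a coefficient `c` and a power-product `t`. -/
noncomputable def monomMul (c : K) (t : PP n) (a : Fin m → MvPolynomial (Fin n) K) :
    Fin m → MvPolynomial (Fin n) K :=
  fun i => MvPolynomial.monomial t c * a i

/-- The coefficient of a term in a module element. -/
def coeffM (a : Fin m → MvPolynomial (Fin n) K) (u : Term n m) : K :=
  MvPolynomial.coeff u.1 (a u.2)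

open Classical in
/-- Leading power-product of a polynomial w.r.t. `ple`
(junk value `0`, i.e. the power-product `1`, for the zero polynomial). -/
noncomputable def lp (p : MvPolynomial (Fin n) K) : PP n :=
  if h : ∃ t, MvPolynomial.coeff t p ≠ 0 ∧ ∀ s, MvPolynomial.coeff s p ≠ 0 → ple s t
  then h.choose else 0

/-- Leading coefficient of a polynomial w.r.t. `ple`. -/
noncomputable def lc (p : MvPolynomial (Fin n) K) : K := MvPolynomial.coeff (lp ple p) p

open Classical in
/-- Signature of a module element: its `tle`-largest term with nonzero coefficient
(junk value for `0`). -/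
noncomputable def sig (a : Fin m → MvPolynomial (Fin n) K) : Term n m :=
  if h : ∃ u, coeffM a u ≠ 0 ∧ ∀ v, coeffM a v ≠ 0 → tle v u
  then h.choose else ((0 : PP n), (0 : Fin m))

/-- Leading coefficient of a module element. -/
noncomputable def lcM (a : Fin m → MvPolynomial (Fin n) K) : K := coeffM a (sig tle a)

/-- One-step s-reduction of `a` to `b` modulo `G`, witnessed by `g ∈ G` and the
power-product `t`. -/
def RedStepWith (G : Set (Fin m → MvPolynomial (Fin n) K))
    (a b g : Fin m → MvPolynomial (Fin n) K) (t : PP n) : Prop :=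
  g ∈ G ∧ bar f g ≠ 0 ∧
    MvPolynomial.coeff (t + lp ple (bar f g)) (bar f a) ≠ 0 ∧
    b = a - monomMul (MvPolynomial.coeff (t + lp ple (bar f g)) (bar f a) / lc ple (bar f g)) t g ∧
    tle (mulTerm t (sig tle g)) (sig tle a)

/-- The step witnessed by `g` and `t` is regular: `t ⊗ 𝔰(g) ≺_t 𝔰(a)`. -/
def RegularWith (a g : Fin m → MvPolynomial (Fin n) K) (t : PP n) : Prop :=
  strict tle (mulTerm t (sig tle g)) (sig tle a)

/-- The step witnessed by `g` and `t` is top: `t·lp(‾g) = lp(‾a)`. -/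
def TopWith (a g : Fin m → MvPolynomial (Fin n) K) (t : PP n) : Prop :=
  t + lp ple (bar f g) = lp ple (bar f a)

/-- `a` s-reduces to `b` modulo `G` in one step. -/
def SigRedStep (G : Set (Fin m → MvPolynomial (Fin n) K))
    (a b : Fin m → MvPolynomial (Fin n) K) : Prop :=
  ∃ g t, RedStepWith f ple tle G a b g t

/-- `a` regular s-reduces to `b` modulo `G` in one step. -/
def RegRedStep (G : Set (Fin m → MvPolynomial (Fin n) K))
    (a b : Fin m → MvPolynomial (Fin n) K) : Prop :=
  ∃ g t, RedStepWith f ple tle G a b g t ∧ RegularWith tle a g t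

/-- `a` regular top s-reduces to `b` modulo `G` in one step. -/
def RegTopRedStep (G : Set (Fin m → MvPolynomial (Fin n) K))
    (a b : Fin m → MvPolynomial (Fin n) K) : Prop :=
  ∃ g t, RedStepWith f ple tle G a b g t ∧ RegularWith tle a g t ∧ TopWith f ple a g t

/-- `a` is regular s-irreducible modulo `G`. -/
def RegIrred (G : Set (Fin m → MvPolynomial (Fin n) K))
    (a : Fin m → MvPolynomial (Fin n) K) : Prop :=
  ∀ b, ¬ RegRedStep f ple tle G a b

/-- `a` is regular top s-irreducible modulo `G`. -/
def RegTopIrred (G : Set (Fin m → MvPolynomial (Fin n) K))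
    (a : Fin m → MvPolynomial (Fin n) K) : Prop :=
  ∀ b, ¬ RegTopRedStep f ple tle G a b

/-- `a` s-reduces to zero modulo `G`. -/
def SigRedZero (G : Set (Fin m → MvPolynomial (Fin n) K))
    (a : Fin m → MvPolynomial (Fin n) K) : Prop :=
  ∃ b, Relation.ReflTransGen (SigRedStep f ple tle G) a b ∧ bar f b = 0

/-- `a` regular s-reduces to zero modulo `G`. -/
def RegRedZero (G : Set (Fin m → MvPolynomial (Fin n) K))
    (a : Fin m → MvPolynomial (Fin n) K) : Prop :=
  ∃ b, Relation.ReflTransGen (RegRedStep f ple tle G) a b ∧ bar f b = 0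

/-- `G` is a signature Gröbner basis in the term `u`. -/
def IsSigGBIn (G : Set (Fin m → MvPolynomial (Fin n) K)) (u : Term n m) : Prop :=
  ∀ a : Fin m → MvPolynomial (Fin n) K, a ≠ 0 → sig tle a = u → SigRedZero f ple tle G a

/-- `G` is a signature Gröbner basis up to the term `u`. -/
def IsSigGBUpto (G : Set (Fin m → MvPolynomial (Fin n) K)) (u : Term n m) : Prop :=
  ∀ v, strict tle v u → IsSigGBIn f ple tle G v

/-- `u` is a syzygy signature. -/
def IsSyzSig (u : Term n m) : Prop :=
  ∃ a : Fin m → MvPolynomial (Fin n) K, a ≠ 0 ∧ sig tle a = u ∧ bar f a = 0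

/-- The sig-poly-pair `(𝔰(a), ‾a)` of a module element `a`. -/
noncomputable def sppOf (a : Fin m → MvPolynomial (Fin n) K) :
    Term n m × MvPolynomial (Fin n) K :=
  (sig tle a, bar f a)

/-- `x` is a sig-poly-pair. -/
def IsSPP (x : Term n m × MvPolynomial (Fin n) K) : Prop :=
  ∃ a : Fin m → MvPolynomial (Fin n) K, a ≠ 0 ∧ sppOf f tle a = x

/-- `ro` is a rewrite order. -/
def IsRewriteOrder
    (ro : Term n m × MvPolynomial (Fin n) K → Term n m × MvPolynomial (Fin n) K → Prop) :
    Prop :=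
  (∀ x, IsSPP f tle x → ro x x) ∧
  (∀ x y z, IsSPP f tle x → IsSPP f tle y → IsSPP f tle z → ro x y → ro y z → ro x z) ∧
  (∀ x y, IsSPP f tle x → IsSPP f tle y → (ro x y ∨ ro y x)) ∧
  (∀ x y, IsSPP f tle x → IsSPP f tle y → ro x y → ro y x → x.1 = y.1) ∧
  (∀ (G : Set (Fin m → MvPolynomial (Fin n) K)) (a b : Fin m → MvPolynomial (Fin n) K),
    IsSigGBUpto f ple tle G (sig tle b) → a ∈ G → b ∈ G → a ≠ 0 → b ≠ 0 →
    termDvd (sig tle a) (sig tle b) → RegTopIrred f ple tle G b →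
    ro (sppOf f tle a) (sppOf f tle b))

/-- `a` is a canonical rewriter in the term `u` w.r.t. `G` (for the rewrite order `ro`). -/
def IsCanonRewriter
    (ro : Term n m × MvPolynomial (Fin n) K → Term n m × MvPolynomial (Fin n) K → Prop)
    (G : Set (Fin m → MvPolynomial (Fin n) K)) (u : Term n m)
    (a : Fin m → MvPolynomial (Fin n) K) : Prop :=
  a ∈ G ∧ a ≠ 0 ∧ termDvd (sig tle a) u ∧
    ∀ g ∈ G, g ≠ 0 → termDvd (sig tle g) u → ro (sppOf f tle g) (sppOf f tle a)

/-- `G` is a rewrite basis in the term `u` (for the rewrite order `ro`). -/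
def IsRBIn
    (ro : Term n m × MvPolynomial (Fin n) K → Term n m × MvPolynomial (Fin n) K → Prop)
    (G : Set (Fin m → MvPolynomial (Fin n) K)) (u : Term n m) : Prop :=
  IsSyzSig f tle u ∨
    ∃ g, IsCanonRewriter f tle ro G u g ∧
      RegTopIrred f ple tle G (monomMul (1 : K) (u.1 - (sig tle g).1) g)

/-- `G` is a rewrite basis up to the term `u` (for the rewrite order `ro`). -/
def IsRBUpto
    (ro : Term n m × MvPolynomial (Fin n) K → Term n m × MvPolynomial (Fin n) K → Prop)
    (G : Set (Fin m → MvPolynomial (Fin n) K)) (u : Term n m) : Prop :=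
  ∀ v, strict tle v u → IsRBIn f ple tle ro G v

/-- The S-pair of two module elements. -/
noncomputable def spair (a b : Fin m → MvPolynomial (Fin n) K) :
    Fin m → MvPolynomial (Fin n) K :=
  monomMul ((1 : K) / lc ple (bar f a))
      (lcmPP (lp ple (bar f a)) (lp ple (bar f b)) - lp ple (bar f a)) a -
    monomMul ((1 : K) / lc ple (bar f b))
      (lcmPP (lp ple (bar f a)) (lp ple (bar f b)) - lp ple (bar f b)) b

/-- `a` and `b` give rise to a regular S-pair. -/
def IsRegularSPair (a b : Fin m → MvPolynomial (Fin n) K) : Prop :=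
  bar f a ≠ 0 ∧ bar f b ≠ 0 ∧
    mulTerm (lcmPP (lp ple (bar f a)) (lp ple (bar f b)) - lp ple (bar f a)) (sig tle a) ≠
      mulTerm (lcmPP (lp ple (bar f a)) (lp ple (bar f b)) - lp ple (bar f b)) (sig tle b)

/-- `B` is a Gröbner basis of the ideal `I` w.r.t. `ple`. -/
def IsGroebnerBasis (B : Set (MvPolynomial (Fin n) K)) (I : Ideal (MvPolynomial (Fin n) K)) :
    Prop :=
  (∀ b ∈ B, b ∈ I) ∧ Ideal.span B = I ∧
    ∀ p ∈ I, p ≠ 0 → ∃ b ∈ B, b ≠ 0 ∧ ∃ t : PP n, lp ple p = t + lp ple b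

/-- One step of ordinary polynomial reduction of `p` to `q` modulo `B`. -/
def PolyRedStep (B : Set (MvPolynomial (Fin n) K)) (p q : MvPolynomial (Fin n) K) : Prop :=
  ∃ r ∈ B, r ≠ 0 ∧ ∃ t : PP n, MvPolynomial.coeff (t + lp ple r) p ≠ 0 ∧
    q = p - MvPolynomial.monomial t (MvPolynomial.coeff (t + lp ple r) p / lc ple r) * r

/-!
Let `‾a ≠ ‾b`. As `a` and `b` have the same signature and leading coefficient, `a - b` has a
strictly smaller signature, so it s-reduces to zero modulo `G`. The first top step of that
reduction yields a top reducer of `a - b`, and its signature lies strictly below that of `a` and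
`b`. Were `lp(‾a - ‾b)` equal to `lp(‾a)` or `lp(‾b)`, this would be a regular top reducer of `a`
or of `b`, contrary to irreducibility. But `lp(‾a - ‾b)` can differ from both `lp(‾a)` and
`lp(‾b)` only if the leading monomials of `‾a` and `‾b` cancel.
-/

section Relation

variable {α : Type*} {r : α → α → Prop}

theorem exists_mem_forall_mem_rel [IsTrans α r] [Std.Total r] {S : Set α} (hfin : S.Finite)
    (hne : S.Nonempty) : ∃ x ∈ S, ∀ y ∈ S, r y x := by
  have := hfin.to_subtype
  have := hne.to_subtype
  obtain ⟨x, hx⟩ := (Std.Total.directed (r := r) ((↑) : S → α)).finite_le id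
  exact ⟨x, x.2, fun y hy => hx ⟨y, hy⟩⟩

theorem strict_of_rel_of_strict [IsTrans α r] [Std.Antisymm r] {x y z : α} (hxy : r x y)
    (hyz : strict r y z) : strict r x z :=
  ⟨trans_of r hxy hyz.1, fun h => hyz.2 (antisymm_of r hyz.1 (h ▸ hxy))⟩

end Relation

section Leading

variable {α A : Type*} {r : α → α → Prop} {c d : α → A} {x y z : α}

/-- `x` bounds the support of the coefficient function `c` from above with respect to `r`. Both the
coefficients of a polynomial and those of a module element are treated as such functions. -/
def SupportLE [Zero A] (r : α → α → Prop) (c : α → A) (x : α) : Prop := ∀ y, c y ≠ 0 → r y x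

/-- `x` is the leading index of the coefficient function `c`: the `r`-largest element of its
support. It specializes to the leading power-product and to the signature. -/
def IsLeading [Zero A] (r : α → α → Prop) (c : α → A) (x : α) : Prop := c x ≠ 0 ∧ SupportLE r c x

theorem SupportLE.mono [Zero A] [IsTrans α r] (hc : SupportLE r c x) (hxy : r x y) :
    SupportLE r c y :=
  fun z hz => trans_of r (hc z hz) hxy

theorem SupportLE.sub [AddGroup A] (hc : SupportLE r c x) (hd : SupportLE r d x) :
    SupportLE r (c - d) x := by
  intro y hy
  by_cases hcy : c y = 0
  · exact hd y fun hdy => hy (by rw [Pi.sub_apply, hcy, hdy, sub_zero])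
  · exact hc y hcy

theorem IsLeading.unique [Zero A] [Std.Antisymm r] (hx : IsLeading r c x) (hy : IsLeading r c y) :
    x = y :=
  antisymm_of r (hy.2 x hx.1) (hx.2 y hy.1)

theorem IsLeading.sub_of_strict [AddGroup A] [IsTrans α r] [Std.Antisymm r]
    (hc : IsLeading r c x) (hd : SupportLE r d y) (hyx : strict r y x) : IsLeading r (c - d) x := by
  have hdx : d x = 0 := by
    by_contra hne
    exact hyx.2 (antisymm_of r hyx.1 (hd x hne))
  exact ⟨by simpa only [Pi.sub_apply, hdx, sub_zero] using hc.1, hc.2.sub (hd.mono hyx.1)⟩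

theorem IsLeading.strict_of_sub [AddGroup A] (hc : IsLeading r c x) (hd : IsLeading r d x)
    (hcd : c x = d x) (hz : IsLeading r (c - d) z) : strict r z x :=
  ⟨hc.2.sub hd.2 z hz.1, by rintro rfl; exact hz.1 (sub_eq_zero.mpr hcd)⟩

theorem IsLeading.sub_cases [AddGroup A] [IsTrans α r] [Std.Antisymm r] [Std.Total r]
    (hcfin : (Function.support c).Finite) (hdfin : (Function.support d).Finite)
    (hz : IsLeading r (c - d) z) :
    IsLeading r c z ∨ IsLeading r d z ∨
      ∃ x, IsLeading r c x ∧ IsLeading r d x ∧ c x = d x := by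
  have hne : (Function.support c ∪ Function.support d).Nonempty :=
    ⟨z, Function.support_sub c d hz.1⟩
  obtain ⟨x, hx, hmax⟩ := exists_mem_forall_mem_rel (r := r) (hcfin.union hdfin) hne
  have hc : SupportLE r c x := fun y hy => hmax y (.inl hy)
  have hd : SupportLE r d x := fun y hy => hmax y (.inr hy)
  by_cases hcd : c x = d x
  · have hcx : c x ≠ 0 := hx.elim id fun h => hcd.trans_ne h
    exact .inr (.inr ⟨x, ⟨hcx, hc⟩, ⟨hcd ▸ hcx, hd⟩, hcd⟩)
  · have hlead : IsLeading r (c - d) x := ⟨sub_ne_zero.mpr hcd, hc.sub hd⟩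
    obtain rfl : x = z := hlead.unique hz
    exact hx.imp (⟨·, hc⟩) fun h => .inl ⟨h, hd⟩

end Leading

theorem finite_support_coeff {σ R : Type*} [CommSemiring R] (p : MvPolynomial σ R) :
    (Function.support p.coeff).Finite :=
  p.support.finite_toSet.subset fun _ hs => MvPolynomial.mem_support_iff.mpr hs

theorem exists_coeff_ne_zero_of_coeff_monomial_mul_ne_zero {σ R : Type*} [CommSemiring R] {c : R}
    {t s : σ →₀ ℕ} {p : MvPolynomial σ R} (h : (MvPolynomial.monomial t c * p).coeff s ≠ 0) :
    ∃ s', p.coeff s' ≠ 0 ∧ t + s' = s := by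
  rw [MvPolynomial.coeff_monomial_mul'] at h
  split_ifs at h with hts
  · exact ⟨s - t, right_ne_zero_of_mul h, add_tsub_cancel_of_le hts⟩
  · exact absurd rfl h

section LeadingPowerProduct

variable {ple} {p q : MvPolynomial (Fin n) K} {t : PP n}

theorem isLeading_lp [IsTrans (PP n) ple] [Std.Total ple] (hp : p ≠ 0) :
    IsLeading ple p.coeff (lp ple p) := by
  have h : ∃ t, IsLeading ple p.coeff t :=
    exists_mem_forall_mem_rel (S := Function.support p.coeff) (finite_support_coeff p)
      (MvPolynomial.ne_zero_iff.mp hp)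
  rw [lp]
  split_ifs with hmax
  · exact hmax.choose_spec
  · exact absurd h hmax

theorem IsLeading.lp_eq [IsTrans (PP n) ple] [Std.Antisymm ple] [Std.Total ple]
    (h : IsLeading ple p.coeff t) : lp ple p = t :=
  (isLeading_lp (MvPolynomial.ne_zero_iff.mpr ⟨t, h.1⟩)).unique h

theorem supportLE_coeff_monomial_mul [IsTrans (PP n) ple] [Std.Total ple]
    (hple : Covariant (PP n) (PP n) (· + ·) ple) (c : K) (t : PP n)
    (p : MvPolynomial (Fin n) K) :
    SupportLE ple (MvPolynomial.monomial t c * p).coeff (t + lp ple p) := by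
  intro s hs
  obtain ⟨s', hs', rfl⟩ := exists_coeff_ne_zero_of_coeff_monomial_mul_ne_zero hs
  exact hple t ((isLeading_lp (MvPolynomial.ne_zero_iff.mpr ⟨s', hs'⟩)).2 s' hs')

theorem lp_sub_cases [IsTrans (PP n) ple] [Std.Antisymm ple] [Std.Total ple] (hpq : p ≠ q) :
    (p ≠ 0 ∧ lp ple (p - q) = lp ple p) ∨ (q ≠ 0 ∧ lp ple (p - q) = lp ple q) ∨
      (p ≠ 0 ∧ q ≠ 0 ∧ lp ple p = lp ple q ∧ lc ple p = lc ple q) := by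
  have hlead : IsLeading ple (p.coeff - q.coeff) (lp ple (p - q)) :=
    isLeading_lp (sub_ne_zero.mpr hpq)
  rcases hlead.sub_cases (finite_support_coeff p) (finite_support_coeff q) with
    hp | hq | ⟨t, hp, hq, hcoeff⟩
  · exact .inl ⟨MvPolynomial.ne_zero_iff.mpr ⟨_, hp.1⟩, hp.lp_eq.symm⟩
  · exact .inr (.inl ⟨MvPolynomial.ne_zero_iff.mpr ⟨_, hq.1⟩, hq.lp_eq.symm⟩)
  · refine .inr (.inr ⟨MvPolynomial.ne_zero_iff.mpr ⟨t, hp.1⟩,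
      MvPolynomial.ne_zero_iff.mpr ⟨t, hq.1⟩, hp.lp_eq.trans hq.lp_eq.symm, ?_⟩)
    rw [lc, lc, hp.lp_eq, hq.lp_eq, hcoeff]

end LeadingPowerProduct

section Module

omit [NeZero m]

theorem bar_zero : bar f 0 = 0 := by
  simp only [bar, Pi.zero_apply, zero_mul, Finset.sum_const_zero]

theorem bar_sub (a b : Fin m → MvPolynomial (Fin n) K) : bar f (a - b) = bar f a - bar f b := by
  simp only [bar, Pi.sub_apply, sub_mul, Finset.sum_sub_distrib]

theorem bar_monomMul (c : K) (t : PP n) (a : Fin m → MvPolynomial (Fin n) K) :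
    bar f (monomMul c t a) = MvPolynomial.monomial t c * bar f a := by
  simp only [bar, monomMul, Finset.mul_sum, mul_assoc]

variable {f} in
theorem ne_zero_of_bar_ne_zero {a : Fin m → MvPolynomial (Fin n) K} (ha : bar f a ≠ 0) : a ≠ 0 :=
  fun h => ha (h ▸ bar_zero f)

theorem finite_support_coeffM (a : Fin m → MvPolynomial (Fin n) K) :
    (Function.support (coeffM a)).Finite := by
  refine (Set.finite_iUnion fun i => (a i).support.finite_toSet.image (·, i)).subset ?_
  rintro ⟨s, i⟩ hs
  exact Set.mem_iUnion.mpr ⟨i, s, MvPolynomial.mem_support_iff.mpr hs, rfl⟩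

theorem exists_coeffM_ne_zero {a : Fin m → MvPolynomial (Fin n) K} (ha : a ≠ 0) :
    ∃ u, coeffM a u ≠ 0 := by
  obtain ⟨i, hi⟩ := Function.ne_iff.mp ha
  obtain ⟨s, hs⟩ := MvPolynomial.ne_zero_iff.mp hi
  exact ⟨(s, i), hs⟩

end Module

section Signature

variable {tle} {a b : Fin m → MvPolynomial (Fin n) K}

theorem isLeading_sig [IsTrans (Term n m) tle] [Std.Total tle] (ha : a ≠ 0) :
    IsLeading tle (coeffM a) (sig tle a) := by
  have h : ∃ u, IsLeading tle (coeffM a) u :=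
    exists_mem_forall_mem_rel (finite_support_coeffM a) (exists_coeffM_ne_zero ha)
  rw [sig]
  split_ifs with hmax
  · exact hmax.choose_spec
  · exact absurd h hmax

theorem supportLE_coeffM_monomMul [IsTrans (Term n m) tle] [Std.Total tle]
    (htle : Covariant (PP n) (Term n m) mulTerm tle) (c : K) (t : PP n) (ha : a ≠ 0) :
    SupportLE tle (coeffM (monomMul c t a)) (mulTerm t (sig tle a)) := by
  rintro ⟨s, i⟩ hs
  obtain ⟨s', hs', rfl⟩ := exists_coeff_ne_zero_of_coeff_monomial_mul_ne_zero hs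
  exact htle t ((isLeading_sig ha).2 (s', i) hs')

theorem strict_sig_sub [IsTrans (Term n m) tle] [Std.Total tle] (ha : a ≠ 0) (hb : b ≠ 0)
    (hab : a - b ≠ 0) (hsig : sig tle a = sig tle b) (hlc : lcM tle a = lcM tle b) :
    strict tle (sig tle (a - b)) (sig tle a) := by
  have hleadb : IsLeading tle (coeffM b) (sig tle a) := hsig ▸ isLeading_sig hb
  have hcoeff : coeffM a (sig tle a) = coeffM b (sig tle a) := by
    rwa [lcM, lcM, ← hsig] at hlc
  exact (isLeading_sig ha).strict_of_sub hleadb hcoeff (isLeading_sig hab)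

end Signature

section Reduction

variable {f ple tle} {G : Set (Fin m → MvPolynomial (Fin n) K)}
  {a b g : Fin m → MvPolynomial (Fin n) K} {t : PP n}

theorem RedStepWith.lp_bar_eq [IsTrans (PP n) ple] [Std.Antisymm ple] [Std.Total ple]
    (hple : Covariant (PP n) (PP n) (· + ·) ple) (h : RedStepWith f ple tle G a b g t)
    (htop : ¬ TopWith f ple a g t) :
    bar f b ≠ 0 ∧ lp ple (bar f b) = lp ple (bar f a) := by
  obtain ⟨-, -, hcoeff, rfl, -⟩ := h
  rw [bar_sub, bar_monomMul]
  set c := (bar f a).coeff (t + lp ple (bar f g)) / lc ple (bar f g)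
  have hleada : IsLeading ple (bar f a).coeff (lp ple (bar f a)) :=
    isLeading_lp (MvPolynomial.ne_zero_iff.mpr ⟨_, hcoeff⟩)
  have hlead : IsLeading ple (bar f a - MvPolynomial.monomial t c * bar f g).coeff
      (lp ple (bar f a)) :=
    hleada.sub_of_strict (supportLE_coeff_monomial_mul hple c t (bar f g))
      ⟨hleada.2 _ hcoeff, htop⟩
  exact ⟨MvPolynomial.ne_zero_iff.mpr ⟨_, hlead.1⟩, hlead.lp_eq⟩

theorem RedStepWith.sig_le [IsTrans (Term n m) tle] [Std.Total tle]
    (htle : Covariant (PP n) (Term n m) mulTerm tle) (h : RedStepWith f ple tle G a b g t)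
    (hb : b ≠ 0) : tle (sig tle b) (sig tle a) := by
  obtain ⟨-, hg, hcoeff, rfl, hsig⟩ := h
  have ha : a ≠ 0 := ne_zero_of_bar_ne_zero (MvPolynomial.ne_zero_iff.mpr ⟨_, hcoeff⟩)
  set c := (bar f a).coeff (t + lp ple (bar f g)) / lc ple (bar f g)
  have hbound : SupportLE tle (coeffM (monomMul c t g)) (sig tle a) :=
    (supportLE_coeffM_monomMul htle c t (ne_zero_of_bar_ne_zero hg)).mono hsig
  exact (isLeading_sig ha).2.sub hbound _ (isLeading_sig hb).1

variable (f ple tle) in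
/-- `g`, multiplied by the power-product `t`, is a top s-reducer of `a` modulo `G`: it witnesses
a top s-reduction step starting from `a`, provided that `‾a ≠ 0`. -/
structure IsTopReducer (G : Set (Fin m → MvPolynomial (Fin n) K))
    (a g : Fin m → MvPolynomial (Fin n) K) (t : PP n) : Prop where
  mem : g ∈ G
  bar_ne_zero : bar f g ≠ 0
  topWith : TopWith f ple a g t
  sig_le : tle (mulTerm t (sig tle g)) (sig tle a)

theorem IsTopReducer.of_lp_eq [IsTrans (Term n m) tle] (h : IsTopReducer f ple tle G b g t)
    (hlp : lp ple (bar f b) = lp ple (bar f a)) (hsig : tle (sig tle b) (sig tle a)) :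
    IsTopReducer f ple tle G a g t :=
  ⟨h.mem, h.bar_ne_zero, h.topWith.trans hlp, trans_of tle h.sig_le hsig⟩

theorem SigRedZero.exists_isTopReducer [IsLinearOrder (PP n) ple] [IsTrans (Term n m) tle]
    [Std.Total tle] (hple : Covariant (PP n) (PP n) (· + ·) ple)
    (htle : Covariant (PP n) (Term n m) mulTerm tle) (h : SigRedZero f ple tle G a)
    (ha : bar f a ≠ 0) : ∃ g t, IsTopReducer f ple tle G a g t := by
  obtain ⟨z, hred, hz⟩ := h
  induction hred using Relation.ReflTransGen.head_induction_on with
  | refl => exact absurd hz ha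
  | @head x _ hxy _ ih =>
    obtain ⟨g, t, hstep⟩ := hxy
    by_cases htop : TopWith f ple x g t
    · exact ⟨g, t, hstep.1, hstep.2.1, htop, hstep.2.2.2.2⟩
    · obtain ⟨hbar, hlp⟩ := hstep.lp_bar_eq hple htop
      obtain ⟨g', t', hred'⟩ := ih hbar
      exact ⟨g', t', hred'.of_lp_eq hlp (hstep.sig_le htle (ne_zero_of_bar_ne_zero hbar))⟩

theorem RegTopIrred.not_regularWith [IsTrans (PP n) ple] [Std.Total ple]
    (hirr : RegTopIrred f ple tle G a) (ha : bar f a ≠ 0) (hred : IsTopReducer f ple tle G a g t) :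
    ¬ RegularWith tle a g t := by
  intro hreg
  have hcoeff : (bar f a).coeff (t + lp ple (bar f g)) ≠ 0 :=
    hred.topWith.symm ▸ (isLeading_lp ha).1
  exact hirr _ ⟨g, t, ⟨hred.mem, hred.bar_ne_zero, hcoeff, rfl, hred.sig_le⟩, hreg, hred.topWith⟩

theorem RegTopIrred.lp_bar_ne_of_sigRedZero [IsLinearOrder (PP n) ple]
    [IsLinearOrder (Term n m) tle] (hple : Covariant (PP n) (PP n) (· + ·) ple)
    (htle : Covariant (PP n) (Term n m) mulTerm tle) (hirr : RegTopIrred f ple tle G a)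
    (ha : bar f a ≠ 0) (hzero : SigRedZero f ple tle G b) (hb : bar f b ≠ 0)
    (hlt : strict tle (sig tle b) (sig tle a)) : lp ple (bar f b) ≠ lp ple (bar f a) := by
  intro hlp
  obtain ⟨g, t, hred⟩ := hzero.exists_isTopReducer hple htle hb
  exact hirr.not_regularWith ha (hred.of_lp_eq hlp hlt.1) (strict_of_rel_of_strict hred.sig_le hlt)

end Reduction

section Orders

variable {ple tle}

omit [NeZero m]

theorem OrdersOK.isLinearOrder_ple (hord : OrdersOK ple tle) : IsLinearOrder (PP n) ple where
  refl := hord.ple_refl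
  trans := hord.ple_trans
  antisymm := hord.ple_antisymm
  total := hord.ple_total

theorem OrdersOK.isLinearOrder_tle (hord : OrdersOK ple tle) : IsLinearOrder (Term n m) tle where
  refl := hord.tle_refl
  trans := hord.tle_trans
  antisymm := hord.tle_antisymm
  total := hord.tle_total

end Orders

theorem reg_top_irred_lp_lc_unique_general [IsLinearOrder (PP n) ple]
    [IsLinearOrder (Term n m) tle] (hple : Covariant (PP n) (PP n) (· + ·) ple)
    (htle : Covariant (PP n) (Term n m) mulTerm tle) (G : Set (Fin m → MvPolynomial (Fin n) K))
    (a b : Fin m → MvPolynomial (Fin n) K) (ha : a ≠ 0) (hb : b ≠ 0)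
    (hsig : sig tle a = sig tle b) (hlc : lcM tle a = lcM tle b)
    (hGB : IsSigGBUpto f ple tle G (sig tle a))
    (hirra : RegTopIrred f ple tle G a) (hirrb : RegTopIrred f ple tle G b) :
    (bar f a = 0 ↔ bar f b = 0) ∧
      (bar f a ≠ 0 → bar f b ≠ 0 →
        lp ple (bar f a) = lp ple (bar f b) ∧ lc ple (bar f a) = lc ple (bar f b)) := by
  by_cases hbar : bar f a = bar f b
  · simp only [hbar, and_self, implies_true]
  have hsub : bar f (a - b) ≠ 0 := by rwa [bar_sub, sub_ne_zero]
  have hab : a - b ≠ 0 := ne_zero_of_bar_ne_zero hsub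
  have hlt : strict tle (sig tle (a - b)) (sig tle a) := strict_sig_sub ha hb hab hsig hlc
  have hzero : SigRedZero f ple tle G (a - b) := hGB _ hlt _ hab rfl
  rcases lp_sub_cases (ple := ple) hbar with ⟨hne, hlp⟩ | ⟨hne, hlp⟩ | ⟨hnea, hneb, heq⟩
  · rw [← bar_sub] at hlp
    exact absurd hlp (hirra.lp_bar_ne_of_sigRedZero hple htle hne hzero hsub hlt)
  · rw [← bar_sub] at hlp
    exact absurd hlp (hirrb.lp_bar_ne_of_sigRedZero hple htle hne hzero hsub (hsig ▸ hlt))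
  · exact ⟨iff_of_false hnea hneb, fun _ _ => heq⟩

/-- uniqueness of leading power-product and leading coefficient for
regular top s-irreducible elements with equal signatures and leading coefficients. -/
theorem reg_top_irred_lp_lc_unique (hord : OrdersOK ple tle)
    (G : Set (Fin m → MvPolynomial (Fin n) K))
    (a b : Fin m → MvPolynomial (Fin n) K) (ha : a ≠ 0) (hb : b ≠ 0)
    (hsig : sig tle a = sig tle b) (hlc : lcM tle a = lcM tle b)
    (hGB : IsSigGBUpto f ple tle G (sig tle a))
    (hirra : RegTopIrred f ple tle G a) (hirrb : RegTopIrred f ple tle G b) :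
    (bar f a = 0 ↔ bar f b = 0) ∧
      (bar f a ≠ 0 → bar f b ≠ 0 →
        lp ple (bar f a) = lp ple (bar f b) ∧ lc ple (bar f a) = lc ple (bar f b)) := by
  have := hord.isLinearOrder_ple
  have := hord.isLinearOrder_tle
  exact reg_top_irred_lp_lc_unique_general f ple tle (fun t _ _ => hord.ple_mul t _ _)
    (fun t _ _ => hord.tle_mul t _ _) G a b ha hb hsig hlc hGB hirra hirrb

end

end SigGB
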